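/- arXiv:1812.01361 — 2 statements merged into one kernel-verified Lean document; each statement's English description precedes it below -/
import Mathlib

section
/- Let v_1, v_2, v_3 : ℝ → ℝ be nonincreasing functions that are Lipschitz continuous with constant L and satisfy 0 ≤ v_j ≤ M on [0,1]. Define S_1(a,b) = (v_2(b) − v_1(a))⁺ a − (v_2(b) − v_1(a))⁻ b and S_2(b,c) = (v_3(c) − v_2(b))⁺ b − (v_3(c) − v_2(b))⁻ c. Then there is a constant C, depending only on L and M (e.g. C = max(M + L, 2L)), such that for all u_1, u_2, u_3, ū_1, ū_2, ū_3 ∈ [0,1] with u_2 > ū_2: S_1(u_1,u_2) − S_1(ū_1,ū_2) − (S_2(u_2,u_3) − S_2(ū_2,ū_3)) ≤ C · ((u_1 − ū_1)⁺ + (u_3 − ū_3)⁺). -/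
open Set

/-- Positive part `a⁺ = max(a,0)`. -/
noncomputable def pp (a : ℝ) : ℝ := max a 0

/-- Negative part `a⁻ = −min(a,0)`. -/
noncomputable def np (a : ℝ) : ℝ := -(min a 0)

/-- The lane-exchange source term
`S(a,b) = (v₂(b) − v₁(a))⁺ a − (v₂(b) − v₁(a))⁻ b` between a lane with velocity `v₁`
and a lane with velocity `v₂`. -/
noncomputable def S2 (v₁ v₂ : ℝ → ℝ) (a b : ℝ) : ℝ :=
  pp (v₂ b - v₁ a) * a - np (v₂ b - v₁ a) * b

/-
The source is antisymmetric under exchange of the two lanes, `S(b,a) = -S(a,b)`, so `-S₂` is the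
source between lane 3 and lane 2, and both differences in the estimate are of one kind: the source
into lane 2 from a neighbour, compared at two states. The source increases with the density of
the neighbour and decreases with that of lane 2, so raising `ū₂` to `u₂` only helps and what is
left is a one-sided Lipschitz bound in the density of the neighbour.
-/

lemma pp_eq_posPart (x : ℝ) : pp x = x⁺ := rfl

lemma np_eq_negPart (x : ℝ) : np x = x⁻ := (negPart_eq_neg_inf_zero x).symm

section PosPart

variable {α : Type*} [Ring α] [LinearOrder α] [IsOrderedRing α] {x y a b c d : α}

lemma posPart_mul_sub_negPart_mul_mono (hxy : x ≤ y) (ha : 0 ≤ a) (hac : a ≤ c)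
    (hd : 0 ≤ d) (hdb : d ≤ b) : x⁺ * a - x⁻ * b ≤ y⁺ * c - y⁻ * d :=
  sub_le_sub (mul_le_mul (posPart_mono hxy) hac ha (posPart_nonneg y))
    (mul_le_mul (negPart_anti hxy) hdb hd (negPart_nonneg x))

lemma posPart_mul_sub_negPart_mul_sub_le (hxy : x ≤ y) (hac : a ≤ c) (hbc : b ≤ c) :
    (y⁺ * a - y⁻ * b) - (x⁺ * a - x⁻ * b) ≤ (y - x) * c :=
  calc
    (y⁺ * a - y⁻ * b) - (x⁺ * a - x⁻ * b) = (y⁺ - x⁺) * a + (x⁻ - y⁻) * b := by noncomm_ring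
    _ ≤ (y⁺ - x⁺) * c + (x⁻ - y⁻) * c :=
      add_le_add (mul_le_mul_of_nonneg_left hac (sub_nonneg.2 (posPart_mono hxy)))
        (mul_le_mul_of_nonneg_left hbc (sub_nonneg.2 (negPart_anti hxy)))
    _ = ((y⁺ - y⁻) - (x⁺ - x⁻)) * c := by noncomm_ring
    _ = (y - x) * c := by rw [posPart_sub_negPart, posPart_sub_negPart]

end PosPart

section Source

variable {L : NNReal} {M R a a' b b' : ℝ} {v w : ℝ → ℝ}

lemma S2_eq_posPart_sub_negPart (v w : ℝ → ℝ) (a b : ℝ) :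
    S2 v w a b = (w b - v a)⁺ * a - (w b - v a)⁻ * b := by
  rw [S2, pp_eq_posPart, np_eq_negPart]

lemma S2_swap (v w : ℝ → ℝ) (a b : ℝ) : S2 w v b a = -S2 v w a b := by
  rw [S2_eq_posPart_sub_negPart, S2_eq_posPart_sub_negPart, ← neg_sub (w b) (v a), posPart_neg,
    negPart_neg, neg_sub]

lemma S2_le_S2 (hv : AntitoneOn v (Icc 0 R)) (hw : AntitoneOn w (Icc 0 R))
    (ha : a ∈ Icc 0 R) (ha' : a' ∈ Icc 0 R) (hb : b ∈ Icc 0 R) (hb' : b' ∈ Icc 0 R)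
    (haa' : a ≤ a') (hbb' : b' ≤ b) : S2 v w a b ≤ S2 v w a' b' := by
  simp only [S2_eq_posPart_sub_negPart]
  exact posPart_mul_sub_negPart_mul_mono (sub_le_sub (hw hb' hb hbb') (hv ha ha' haa'))
    ha.1 haa' hb'.1 hbb'

lemma S2_sub_S2_le_mul_sub (hM : 0 ≤ M) (hv : AntitoneOn v (Icc 0 R))
    (hvL : LipschitzOnWith L v (Icc 0 R)) (ha : a ∈ Icc 0 R) (ha' : a' ∈ Icc 0 R) (hb : b ≤ R)
    (haa' : a ≤ a') (hwv : w b - v a' ≤ M) :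
    S2 v w a' b - S2 v w a b ≤ (M + L * R) * (a' - a) := by
  set x := w b - v a with hx
  set x' := w b - v a' with hx'
  have hxx' : x ≤ x' := sub_le_sub_left (hv ha ha' haa') (w b)
  have hx'_posPart : x'⁺ ≤ M := max_le hwv hM
  have hx_lip : x' - x ≤ L * (a' - a) :=
    calc
      x' - x = v a - v a' := by rw [hx, hx']; ring
      _ ≤ dist (v a') (v a) := by rw [dist_comm]; exact le_abs_self _
      _ ≤ L * dist a' a := hvL.dist_le_mul a' ha' a ha
      _ = L * (a' - a) := by rw [Real.dist_eq, abs_of_nonneg (sub_nonneg.2 haa')]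
  calc
    S2 v w a' b - S2 v w a b
        = x'⁺ * (a' - a) + ((x'⁺ * a - x'⁻ * b) - (x⁺ * a - x⁻ * b)) := by
      rw [S2_eq_posPart_sub_negPart, S2_eq_posPart_sub_negPart]; ring
    _ ≤ M * (a' - a) + (x' - x) * R :=
      add_le_add (mul_le_mul_of_nonneg_right hx'_posPart (sub_nonneg.2 haa'))
        (posPart_mul_sub_negPart_mul_sub_le hxx' ha.2 hb)
    _ ≤ M * (a' - a) + L * (a' - a) * R := by
      gcongr
      exact ha.1.trans ha.2
    _ = (M + L * R) * (a' - a) := by ring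

lemma S2_sub_S2_le_mul_pp (hM : 0 ≤ M) (hv : AntitoneOn v (Icc 0 R))
    (hw : AntitoneOn w (Icc 0 R)) (hvL : LipschitzOnWith L v (Icc 0 R))
    (ha : a ∈ Icc 0 R) (ha' : a' ∈ Icc 0 R) (hb : b ∈ Icc 0 R) (hb' : b' ∈ Icc 0 R)
    (hbb' : b ≤ b') (hwv : w b' - v a' ≤ M) :
    S2 v w a' b' - S2 v w a b ≤ (M + L * R) * pp (a' - a) := by
  rw [pp_eq_posPart]
  rcases le_total a a' with haa' | haa'
  · calc
      S2 v w a' b' - S2 v w a b ≤ S2 v w a' b' - S2 v w a b' :=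
        sub_le_sub_left (S2_le_S2 hv hw ha ha hb' hb le_rfl hbb') _
      _ ≤ (M + L * R) * (a' - a) := S2_sub_S2_le_mul_sub hM hv hvL ha ha' hb'.2 haa' hwv
      _ = (M + L * R) * (a' - a)⁺ := by rw [posPart_of_nonneg (sub_nonneg.2 haa')]
  · rw [posPart_of_nonpos (sub_nonpos.2 haa'), mul_zero, sub_nonpos]
    exact S2_le_S2 hv hw ha' ha hb' hb haa' hbb'

end Source

theorem source_difference_estimate_general {L : NNReal} {M R : ℝ} (hM : 0 ≤ M)
    {v₁ v₂ v₃ : ℝ → ℝ} (hv₁ : AntitoneOn v₁ (Icc 0 R)) (hv₂ : AntitoneOn v₂ (Icc 0 R))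
    (hv₃ : AntitoneOn v₃ (Icc 0 R)) (hL₁ : LipschitzOnWith L v₁ (Icc 0 R))
    (hL₃ : LipschitzOnWith L v₃ (Icc 0 R))
    (hM₁ : ∀ x ∈ Icc 0 R, ∀ y ∈ Icc 0 R, v₂ y - v₁ x ≤ M)
    (hM₃ : ∀ x ∈ Icc 0 R, ∀ y ∈ Icc 0 R, v₂ y - v₃ x ≤ M)
    {u₁ u₂ u₃ ub₁ ub₂ ub₃ : ℝ} (hu₁ : u₁ ∈ Icc 0 R) (hu₂ : u₂ ∈ Icc 0 R) (hu₃ : u₃ ∈ Icc 0 R)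
    (hub₁ : ub₁ ∈ Icc 0 R) (hub₂ : ub₂ ∈ Icc 0 R) (hub₃ : ub₃ ∈ Icc 0 R) (h₂ : ub₂ ≤ u₂) :
    S2 v₁ v₂ u₁ u₂ - S2 v₁ v₂ ub₁ ub₂ - (S2 v₂ v₃ u₂ u₃ - S2 v₂ v₃ ub₂ ub₃)
      ≤ (M + L * R) * (pp (u₁ - ub₁) + pp (u₃ - ub₃)) := by
  have from_lane₁ : S2 v₁ v₂ u₁ u₂ - S2 v₁ v₂ ub₁ ub₂ ≤ (M + L * R) * pp (u₁ - ub₁) :=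
    S2_sub_S2_le_mul_pp hM hv₁ hv₂ hL₁ hub₁ hu₁ hub₂ hu₂ h₂ (hM₁ u₁ hu₁ u₂ hu₂)
  have from_lane₃ : S2 v₃ v₂ u₃ u₂ - S2 v₃ v₂ ub₃ ub₂ ≤ (M + L * R) * pp (u₃ - ub₃) :=
    S2_sub_S2_le_mul_pp hM hv₃ hv₂ hL₃ hub₃ hu₃ hub₂ hu₂ h₂ (hM₃ u₃ hu₃ u₂ hu₂)
  rw [S2_swap v₃ v₂, S2_swap v₃ v₂]
  linarith

/-- **One-sided estimate on differences of source contributions.** There is a constant `C`,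
depending only on the Lipschitz constant `L` and the bound `M` (e.g. `C = max(M+L, 2L)`),
such that for any three nonincreasing `L`-Lipschitz velocities with values in `[0,M]` on
`[0,1]`, and any `u₁,u₂,u₃,ū₁,ū₂,ū₃ ∈ [0,1]` with `u₂ > ū₂`,
`S₁(u₁,u₂) − S₁(ū₁,ū₂) − (S₂(u₂,u₃) − S₂(ū₂,ū₃)) ≤ C ((u₁−ū₁)⁺ + (u₃−ū₃)⁺)`. -/
theorem source_difference_estimate (L : NNReal) (M : ℝ) (hM : 0 ≤ M) :
    ∃ C : ℝ, ∀ v₁ v₂ v₃ : ℝ → ℝ,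
      Antitone v₁ → Antitone v₂ → Antitone v₃ →
      LipschitzWith L v₁ → LipschitzWith L v₂ → LipschitzWith L v₃ →
      (∀ x ∈ Icc (0:ℝ) 1, v₁ x ∈ Icc 0 M) →
      (∀ x ∈ Icc (0:ℝ) 1, v₂ x ∈ Icc 0 M) →
      (∀ x ∈ Icc (0:ℝ) 1, v₃ x ∈ Icc 0 M) →
      ∀ u₁ u₂ u₃ ub₁ ub₂ ub₃ : ℝ,
        u₁ ∈ Icc (0:ℝ) 1 → u₂ ∈ Icc (0:ℝ) 1 → u₃ ∈ Icc (0:ℝ) 1 →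
        ub₁ ∈ Icc (0:ℝ) 1 → ub₂ ∈ Icc (0:ℝ) 1 → ub₃ ∈ Icc (0:ℝ) 1 →
        ub₂ < u₂ →
        S2 v₁ v₂ u₁ u₂ - S2 v₁ v₂ ub₁ ub₂ - (S2 v₂ v₃ u₂ u₃ - S2 v₂ v₃ ub₂ ub₃)
          ≤ C * (pp (u₁ - ub₁) + pp (u₃ - ub₃)) := by
  refine ⟨M + L * 1, ?_⟩
  intro v₁ v₂ v₃ hv₁ hv₂ hv₃ hL₁ _ hL₃ hM₁ hM₂ hM₃ u₁ u₂ u₃ ub₁ ub₂ ub₃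
    hu₁ hu₂ hu₃ hub₁ hub₂ hub₃ h₂
  exact source_difference_estimate_general hM (hv₁.antitoneOn _) (hv₂.antitoneOn _)
    (hv₃.antitoneOn _) hL₁.lipschitzOnWith hL₃.lipschitzOnWith
    (fun x hx y hy ↦ (sub_le_self _ (hM₁ x hx).1).trans (hM₂ y hy).2)
    (fun x hx y hy ↦ (sub_le_self _ (hM₃ x hx).1).trans (hM₂ y hy).2)
    hu₁ hu₂ hu₃ hub₁ hub₂ hub₃ h₂.le
end

section
/- Let N ≥ 1, Δy > 0, and let (u_i)_{i=0}^{N+1}, (k_i)_{i=0}^{N+1}, (g_i)_{i=0}^{N+1} be real sequences. Set V_i = −k_i g_i and S_i = (V_{i+1} − V_i)⁺ u_i − (V_{i+1} − V_i)⁻ u_{i+1}, and define the divided differences D⁺a_i = (a_{i+1} − a_i)/Δy and D⁻a_i = (a_i − a_{i−1})/Δy. Then for each i = 1, …, N: (S_{i−1} − S_i)/Δy² = D⁻(u_i · D⁺(k_i g_i)) + Δy · D⁻((D⁺u_i) · (D⁺(k_i g_i))⁺), where on the right-hand side D⁻ acts on the sequences i ↦ u_i D⁺(k_i g_i) and i ↦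 (D⁺u_i)(D⁺(k_i g_i))⁺ respectively. -/
/-- Forward divided difference `D⁺aᵢ = (aᵢ₊₁ − aᵢ)/Δy`. -/
noncomputable def Dp (dy : ℝ) (a : ℕ → ℝ) (i : ℕ) : ℝ := (a (i+1) - a i) / dy

/-- Backward divided difference `D⁻aᵢ = (aᵢ − aᵢ₋₁)/Δy`. -/
noncomputable def Dm (dy : ℝ) (a : ℕ → ℝ) (i : ℕ) : ℝ := (a i - a (i-1)) / dy

/-- The lane-exchange term `Sᵢ = (Vᵢ₊₁ − Vᵢ)⁺ uᵢ − (Vᵢ₊₁ − Vᵢ)⁻ uᵢ₊₁`. -/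
noncomputable def Sseq (u V : ℕ → ℝ) (i : ℕ) : ℝ :=
  pp (V (i+1) - V i) * u i - np (V (i+1) - V i) * u (i+1)

lemma pp_mul_of_nonneg {c : ℝ} (hc : 0 ≤ c) (a : ℝ) : pp (c * a) = c * pp a := by
  rw [pp, pp, mul_max_of_nonneg a 0 hc, mul_zero]

lemma np_neg (a : ℝ) : np (-a) = pp a := by
  rw [np, pp, ← max_neg_neg, neg_neg, neg_zero]

lemma pp_sub_np (a : ℝ) : pp a - np a = a := by
  rw [pp, np, sub_neg_eq_add, max_add_min, add_zero]

section DividedDifference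

lemma mul_Dp {dy : ℝ} (hdy : dy ≠ 0) (a : ℕ → ℝ) (i : ℕ) :
    dy * Dp dy a i = a (i + 1) - a i :=
  mul_div_cancel₀ _ hdy

variable (dy : ℝ)

lemma Dm_add (a b : ℕ → ℝ) (i : ℕ) :
    Dm dy (fun j => a j + b j) i = Dm dy a i + Dm dy b i := by
  simp only [Dm]
  ring

lemma Dm_const_mul (c : ℝ) (a : ℕ → ℝ) (i : ℕ) :
    Dm dy (fun j => c * a j) i = c * Dm dy a i := by
  simp only [Dm]
  ring

end DividedDifference

section LaneExchange

variable (u : ℕ → ℝ)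

/- Trading `a⁺` for `a + a⁻` leaves a single one-sided part, as a correction in the jump of `u`;
for `V = -w` that part becomes the positive part of the jump of `w`. -/
lemma Sseq_eq_sub_np_mul_sub (V : ℕ → ℝ) (i : ℕ) :
    Sseq u V i = (V (i + 1) - V i) * u i - np (V (i + 1) - V i) * (u (i + 1) - u i) := by
  rw [Sseq]
  linear_combination u i * pp_sub_np (V (i + 1) - V i)

lemma Sseq_neg (w : ℕ → ℝ) (i : ℕ) :
    Sseq u (fun j => -w j) i =
      -((w (i + 1) - w i) * u i + pp (w (i + 1) - w i) * (u (i + 1) - u i)) := by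
  have neg_jump : -w (i + 1) - -w i = -(w (i + 1) - w i) := by ring
  rw [Sseq_eq_sub_np_mul_sub, neg_jump, np_neg]
  ring

lemma Sseq_neg_eq_mul_Dp {dy : ℝ} (hdy : 0 < dy) (w : ℕ → ℝ) (i : ℕ) :
    Sseq u (fun j => -w j) i =
      -(dy * (u i * Dp dy w i + dy * (Dp dy u i * pp (Dp dy w i)))) := by
  rw [Sseq_neg, ← mul_Dp hdy.ne' w, ← mul_Dp hdy.ne' u, pp_mul_of_nonneg hdy.le]
  ring

end LaneExchange

/-- **Alternative discrete conservative form of the source term.** With `Vᵢ = −kᵢgᵢ`, for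
`i = 1, …, N`:
`(Sᵢ₋₁ − Sᵢ)/Δy² = D⁻(uᵢ D⁺(kᵢgᵢ)) + Δy D⁻((D⁺uᵢ)(D⁺(kᵢgᵢ))⁺)`. -/
theorem discrete_source_identity_alt
    (N : ℕ) (hN : 1 ≤ N) (dy : ℝ) (hdy : 0 < dy)
    (u k g : ℕ → ℝ) (i : ℕ) (hi1 : 1 ≤ i) (hiN : i ≤ N) :
    (Sseq u (fun j => -(k j * g j)) (i-1) - Sseq u (fun j => -(k j * g j)) i) / dy^2
      = Dm dy (fun j => u j * Dp dy (fun l => k l * g l) j) i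
        + dy * Dm dy (fun j => Dp dy u j * pp (Dp dy (fun l => k l * g l) j)) i := by
  let w : ℕ → ℝ := fun j => k j * g j
  let F : ℕ → ℝ := fun j => u j * Dp dy w j + dy * (Dp dy u j * pp (Dp dy w j))
  have source_eq (j : ℕ) : Sseq u (fun l => -w l) j = -(dy * F j) := Sseq_neg_eq_mul_Dp u hdy w j
  calc (Sseq u (fun j => -w j) (i - 1) - Sseq u (fun j => -w j) i) / dy ^ 2
      = Dm dy F i := by
        rw [source_eq, source_eq, Dm]
        field_simp
        ring
    _ = Dm dy (fun j => u j * Dp dy w j) i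
          + dy * Dm dy (fun j => Dp dy u j * pp (Dp dy w j)) i := by
        rw [Dm_add, Dm_const_mul]
end
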